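/- arXiv:2407.07794 — 6 statements merged into one kernel-verified Lean document; each statement's English description precedes it below -/
import Mathlib

section
/- Let X be a real normed vector space and m a natural number. Let Λ = (λ_j)_{j=1,…,m} be an adaptive measurement scheme of length m on X, with induced measurement map F_Λ : X → ℝ^m. Define the linear map A : X → ℝ^m whose j-th component is the zero-history functional A_j := λ_j(0,…,0) (the functional selected when all previous outcomes are 0). Then for every x ∈ X with A x = 0 one has F_Λ x = 0; in particular F_Λ vanishes on K ∩ ker A for any subset K ⊆ X. -/
open scoped ENNReal Pointwise

/-- An adaptive measurement scheme of length `m` on `X`: the `j`-th linear functional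
is selected based on the vector of previous `j` measurement outcomes. -/
def AdaptiveScheme (X : Type*) [NormedAddCommGroup X] [NormedSpace ℝ X] (m : ℕ) :=
  ∀ j : Fin m, ((Fin (j : ℕ)) → ℝ) → (X →ₗ[ℝ] ℝ)

/-- The measurement map `F_Λ` induced by an adaptive scheme: the `j`-th outcome is obtained
by applying the functional selected from the previous outcomes. -/
noncomputable def AdaptiveScheme.measMap {X : Type*} [NormedAddCommGroup X] [NormedSpace ℝ X]
    {m : ℕ} (Λ : AdaptiveScheme X m) (x : X) : Fin m → ℝ := fun j =>
  Λ j (fun i => Λ.measMap x ⟨i, i.isLt.trans j.isLt⟩) x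
termination_by j => (j : ℕ)
decreasing_by exact i.isLt

/-- The Gelfand `m`-width of a subset `K` of `X`. -/
noncomputable def gelfandWidth {X : Type*} [NormedAddCommGroup X] [NormedSpace ℝ X]
    (m : ℕ) (K : Set X) : ℝ≥0∞ :=
  ⨅ A : X →ₗ[ℝ] (Fin m → ℝ), ⨆ x ∈ K ∩ (LinearMap.ker A : Set X), (‖x‖₊ : ℝ≥0∞)

/-- The (non-adaptive) compressive `m`-width of a subset `K` of `X`. -/
noncomputable def compWidth {X : Type*} [NormedAddCommGroup X] [NormedSpace ℝ X]
    (m : ℕ) (K : Set X) : ℝ≥0∞ :=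
  ⨅ (A : X →ₗ[ℝ] (Fin m → ℝ)) (Δ : (Fin m → ℝ) → X), ⨆ x ∈ K, (‖x - Δ (A x)‖₊ : ℝ≥0∞)

/-- The adaptive compressive `m`-width of a subset `K` of `X`. -/
noncomputable def adaCompWidth {X : Type*} [NormedAddCommGroup X] [NormedSpace ℝ X]
    (m : ℕ) (K : Set X) : ℝ≥0∞ :=
  ⨅ (Λ : AdaptiveScheme X m) (Δ : (Fin m → ℝ) → X),
    ⨆ x ∈ K, (‖x - Δ (Λ.measMap x)‖₊ : ℝ≥0∞)

/-- The measurement map of an adaptive scheme vanishes wherever the linear map built from the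
zero-history functionals vanishes; in particular it vanishes on `K ∩ ker A` for any `K`. -/
theorem adaptive_measMap_eq_zero_of_zeroHistory_eq_zero
    {X : Type*} [NormedAddCommGroup X] [NormedSpace ℝ X] {m : ℕ}
    (Λ : AdaptiveScheme X m) (A : X →ₗ[ℝ] (Fin m → ℝ))
    (hA : A = LinearMap.pi fun j => Λ j 0) :
    (∀ x : X, A x = 0 → Λ.measMap x = 0) ∧
      ∀ K : Set X, ∀ x ∈ K ∩ (LinearMap.ker A : Set X), Λ.measMap x = 0 := by
  have key : ∀ x : X, A x = 0 → Λ.measMap x = 0 := by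
    intro x hx
    -- Strong induction on the index: once all earlier outcomes vanish, the functional
    -- selected next is the zero-history one, which kills `x` because `A x = 0`.
    have h : ∀ n : ℕ, ∀ hn : n < m, Λ.measMap x ⟨n, hn⟩ = 0 := by
      intro n
      induction n using Nat.strong_induction_on with
      | _ n ih =>
        intro hn
        rw [AdaptiveScheme.measMap]
        have h0 : (fun i : Fin n => Λ.measMap x ⟨i, i.isLt.trans hn⟩) = 0 :=
          funext fun i => ih i i.isLt _
        have hj : Λ ⟨n, hn⟩ 0 x = 0 := by
          simpa [hA] using congrFun hx ⟨n, hn⟩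
        exact (congrArg (fun v => Λ ⟨n, hn⟩ v x) h0).trans hj
    exact funext fun j => h j j.isLt
  exact ⟨key, fun _ x hx => key x hx.2⟩
end

section
/- Let X be a real normed vector space, m a natural number, and K ⊆ X a subset with K = −K. Then for every adaptive measurement scheme Λ of length m on X and every function Δ : ℝ^m → X, the Gelfand m-width satisfies d^m(K) ≤ sup_{x ∈ K} ‖x − Δ(F_Λ x)‖ (suprema and infima taken in [0,∞]). -/
/-!
Along the all-zero history of outcomes the adaptive scheme always selects the same functionals, so
these form one non-adaptive map `A`, and every `x ∈ ker A` has measurement vector `0`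
(`measMap_eq_zero`). For `x ∈ K ∩ ker A` both `x` and `-x` lie in `K` and are reconstructed as
`z = Δ 0`; since `2 x = (x - z) - (-x - z)`, one of the two errors is at least `‖x‖`.
-/

open scoped ENNReal Pointwise

/-- The non-adaptive measurement map made of the functionals that the scheme selects when all
previous outcomes are zero. -/
def AdaptiveScheme.zeroMap {X : Type*} [NormedAddCommGroup X] [NormedSpace ℝ X]
    {m : ℕ} (Λ : AdaptiveScheme X m) : X →ₗ[ℝ] (Fin m → ℝ) :=
  LinearMap.pi fun j => Λ j 0

lemma AdaptiveScheme.measMap_eq_zero {X : Type*} [NormedAddCommGroup X] [NormedSpace ℝ X]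
    {m : ℕ} (Λ : AdaptiveScheme X m) {x : X} (hx : Λ.zeroMap x = 0) : Λ.measMap x = 0 := by
  have key : ∀ n : ℕ, ∀ hn : n < m, Λ.measMap x ⟨n, hn⟩ = 0 := by
    intro n
    induction n using Nat.strong_induction_on with
    | _ n ih =>
      intro hn
      rw [AdaptiveScheme.measMap]
      have hist : (fun i : Fin n => Λ.measMap x ⟨i, i.isLt.trans hn⟩) = 0 :=
        funext fun i => ih i i.isLt _
      exact (congrArg (fun y => Λ ⟨n, hn⟩ y x) hist).trans (congrFun hx ⟨n, hn⟩)
  exact funext fun j => key j j.isLt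

lemma norm_le_norm_sub_or_norm_neg_sub {X : Type*} [NormedAddCommGroup X] [NormedSpace ℝ X]
    (x z : X) : ‖x‖ ≤ ‖x - z‖ ∨ ‖x‖ ≤ ‖-x - z‖ := by
  by_contra! h
  have h1 : ‖(2 : ℝ) • x‖ ≤ ‖x - z‖ + ‖-x - z‖ := by
    have h2 : (2 : ℝ) • x = (x - z) - (-x - z) := by rw [two_smul]; abel
    rw [h2]
    exact norm_sub_le _ _
  rw [norm_smul, Real.norm_ofNat] at h1
  linarith [h.1, h.2]

/-- For a symmetric set `K`, the Gelfand `m`-width lower-bounds the worst-case error of any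
adaptive measurement scheme followed by any recovery map. -/
theorem gelfandWidth_le_adaptive_error
    {X : Type*} [NormedAddCommGroup X] [NormedSpace ℝ X] {m : ℕ}
    (K : Set X) (hK : K = -K) (Λ : AdaptiveScheme X m) (Δ : (Fin m → ℝ) → X) :
    gelfandWidth m K ≤ ⨆ x ∈ K, (‖x - Δ (Λ.measMap x)‖₊ : ℝ≥0∞) := by
  refine iInf_le_of_le Λ.zeroMap (iSup₂_le ?_)
  rintro x ⟨hxK, hxA⟩
  have hA : Λ.zeroMap x = 0 := hxA
  have hnK : -x ∈ K := by rw [hK]; simpa using hxK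
  have bound : ∀ w ∈ K, Λ.zeroMap w = 0 → ‖x‖ ≤ ‖w - Δ 0‖ →
      (‖x‖₊ : ℝ≥0∞) ≤ ⨆ x ∈ K, (‖x - Δ (Λ.measMap x)‖₊ : ℝ≥0∞) := by
    intro w hw hwA hle
    refine le_iSup₂_of_le w hw ?_
    rw [Λ.measMap_eq_zero hwA]
    exact ENNReal.coe_le_coe.2 hle
  rcases norm_le_norm_sub_or_norm_neg_sub x (Δ 0) with h | h
  · exact bound x hxK hA h
  · exact bound (-x) hnK (by rw [map_neg, hA, neg_zero]) h
end

section
/- Let X be a real normed vector space, m a natural number, K ⊆ X a subset with K = −K, A : X → ℝ^m a linear map, and Δ : ℝ^m → X any function. Then sup_{x ∈ K ∩ ker A} ‖x‖ ≤ sup_{x ∈ K} ‖x − Δ(A x)‖ (suprema taken in [0,∞]); in particular d^m(K) ≤ E^m(K). -/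
/-!
If `x` lies in the kernel of `A`, then `x` and `-x` produce the same measurement `0`, so every
recovery map returns the same point `Δ 0` for both. By the triangle inequality
`2‖x‖ ≤ ‖x - Δ 0‖ + ‖-x - Δ 0‖`, so at least one of the two errors is at least `‖x‖`, and both
points lie in `K` by symmetry. Taking the infimum over `A` and `Δ` compares the widths.
-/

open scoped ENNReal Pointwise

/-- The worst-case form of the kernel argument, for a fixed pair `(A, Δ)`; it is isolated because
the comparison of the widths needs it for every pair. -/
theorem iSup_ker_le_iSup_error
    {X : Type*} [NormedAddCommGroup X] [NormedSpace ℝ X] {m : ℕ}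
    (K : Set X) (hK : K = -K) (A : X →ₗ[ℝ] (Fin m → ℝ)) (Δ : (Fin m → ℝ) → X) :
    (⨆ x ∈ K ∩ (LinearMap.ker A : Set X), (‖x‖₊ : ℝ≥0∞)) ≤
      ⨆ x ∈ K, (‖x - Δ (A x)‖₊ : ℝ≥0∞) := by
  refine iSup₂_le ?_
  rintro x ⟨hx, hxA⟩
  have hA : A x = 0 := hxA
  have hneg : -x ∈ K := by
    rw [hK]
    simpa using hx
  have key : ‖x‖ ≤ ‖x - Δ 0‖ ∨ ‖x‖ ≤ ‖-x - Δ 0‖ := by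
    by_contra! h
    have h1 : ‖(2 : ℝ) • x‖ ≤ ‖x - Δ 0‖ + ‖-x - Δ 0‖ := by
      have h2 : (2 : ℝ) • x = (x - Δ 0) - (-x - Δ 0) := by
        rw [two_smul]
        abel
      rw [h2]
      exact norm_sub_le _ _
    rw [norm_smul, Real.norm_ofNat] at h1
    linarith [h.1, h.2]
  rcases key with h | h
  · refine le_iSup₂_of_le x hx ?_
    rw [hA]
    exact_mod_cast h
  · refine le_iSup₂_of_le (-x) hneg ?_
    rw [map_neg, hA, neg_zero]
    exact_mod_cast h

/-- For a symmetric set `K`, the worst-case norm over `K ∩ ker A` lower-bounds the worst-case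
reconstruction error of any recovery `Δ` applied to the linear measurements `A`; in particular
the Gelfand `m`-width lower-bounds the non-adaptive compressive `m`-width. -/
theorem gelfandWidth_le_compWidth
    {X : Type*} [NormedAddCommGroup X] [NormedSpace ℝ X] {m : ℕ}
    (K : Set X) (hK : K = -K) (A : X →ₗ[ℝ] (Fin m → ℝ)) (Δ : (Fin m → ℝ) → X) :
    (⨆ x ∈ K ∩ (LinearMap.ker A : Set X), (‖x‖₊ : ℝ≥0∞)) ≤
        (⨆ x ∈ K, (‖x - Δ (A x)‖₊ : ℝ≥0∞)) ∧
      gelfandWidth m K ≤ compWidth m K := by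
  refine ⟨iSup_ker_le_iSup_error K hK A Δ, ?_⟩
  exact le_iInf₂ fun B Γ => (iInf_le _ B).trans (iSup_ker_le_iSup_error K hK B Γ)
end

section
/- Let X be a real normed vector space, m a natural number, a > 0 a real number, and K ⊆ X a subset with K = −K and K + K ⊆ a • K. Let A : X → ℝ^m be a linear map and Δ : ℝ^m → X a function that is consistent on K, i.e., for every x ∈ K one has Δ(A x) ∈ K and A(Δ(A x)) = A x. Then sup_{x ∈ K} ‖x − Δ(A x)‖ ≤ a · sup_{w ∈ K ∩ ker A} ‖w‖ (suprema taken in [0,∞]). -/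
/-!
For `x ∈ K`, symmetry and `K + K ⊆ a • K` write the error `x - Δ (A x)` as `a • w` with `w ∈ K`.
Consistency makes `A` vanish on the error, so `w ∈ ker A` because `a ≠ 0`, and
`‖x - Δ (A x)‖ = a * ‖w‖` is at most `a` times the supremum over `K ∩ ker A`.
-/

open scoped ENNReal Pointwise

/-- If `K` is symmetric, `K + K ⊆ a • K`, and `Δ` is consistent on `K` with respect to `A`,
then the worst-case reconstruction error over `K` is at most `a` times the worst-case norm
over `K ∩ ker A`. -/
theorem consistent_error_le_smul_kernel_sup
    {X : Type*} [NormedAddCommGroup X] [NormedSpace ℝ X] {m : ℕ}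
    (K : Set X) (hK : K = -K) (a : ℝ) (ha : 0 < a) (hKK : K + K ⊆ a • K)
    (A : X →ₗ[ℝ] (Fin m → ℝ)) (Δ : (Fin m → ℝ) → X)
    (hcons : ∀ x ∈ K, Δ (A x) ∈ K ∧ A (Δ (A x)) = A x) :
    (⨆ x ∈ K, (‖x - Δ (A x)‖₊ : ℝ≥0∞)) ≤
      ENNReal.ofReal a * ⨆ w ∈ K ∩ (LinearMap.ker A : Set X), (‖w‖₊ : ℝ≥0∞) := by
  refine iSup₂_le fun x hx => ?_
  obtain ⟨hΔ, hAΔ⟩ := hcons x hx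
  have hneg : -Δ (A x) ∈ K := by
    rw [hK]
    simpa using hΔ
  obtain ⟨w, hw, hwx : a • w = x + -Δ (A x)⟩ := hKK (Set.add_mem_add hx hneg)
  have hker : A w = 0 := by
    have h : a • A w = 0 := by
      rw [← map_smul, hwx, map_add, map_neg, hAΔ, add_neg_cancel]
    exact (smul_eq_zero.mp h).resolve_left ha.ne'
  have hnorm : (‖x - Δ (A x)‖₊ : ℝ≥0∞) = ENNReal.ofReal a * ‖w‖₊ := by
    rw [sub_eq_add_neg, ← hwx, nnnorm_smul, ENNReal.coe_mul]
    congr 1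
    exact Real.enorm_of_nonneg ha.le
  rw [hnorm]
  gcongr
  exact le_iSup₂ (f := fun w (_ : w ∈ K ∩ (LinearMap.ker A : Set X)) => (‖w‖₊ : ℝ≥0∞)) w
    ⟨hw, hker⟩
end

section
/- Let X be a real normed vector space, m a natural number, a > 0 a real number, and K ⊆ X a subset with K = −K and K + K ⊆ a • K. Then E^m(K) ≤ a · d^m(K): for every linear map A : X → ℝ^m there exists a recovery map Δ : ℝ^m → X consistent on K (for every x ∈ K, Δ(A x) ∈ K and A(Δ(A x)) = A x), and for any such Δ the error sup_{x ∈ K} ‖x − Δ(A x)‖ is at most a · sup_{w ∈ K ∩ ker A} ‖w‖; taking infima over A and Δ yields the bound. -/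
/-! The nullspace property drives the estimate: if `x` and `y = Δ (A x)` both lie in `K` and have
the same measurements, then `x - y ∈ ker A`, while symmetry and `K + K ⊆ a • K` give `x - y = a • w`
with `w ∈ K`. As `a ≠ 0`, also `w ∈ ker A`, so `‖x - y‖ = a * ‖w‖` is controlled by the radius of
`K ∩ ker A`. A consistent recovery exists by choosing a point of `K` in each attained fibre of `A`.
The bound on widths follows on taking the infimum over `A`; since `a` is positive and finite, the
multiplication by `a` commutes with that infimum. -/

open scoped ENNReal Pointwise

/-- If `K` is symmetric and `K + K ⊆ a • K`, then: every linear map `A` admits a recovery map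
consistent on `K`; any such consistent recovery has worst-case error at most
`a * sup_{w ∈ K ∩ ker A} ‖w‖`; and consequently `E^m(K) ≤ a * d^m(K)`. -/
theorem compWidth_le_smul_gelfandWidth
    {X : Type*} [NormedAddCommGroup X] [NormedSpace ℝ X] {m : ℕ}
    (K : Set X) (hK : K = -K) (a : ℝ) (ha : 0 < a) (hKK : K + K ⊆ a • K) :
    (∀ A : X →ₗ[ℝ] (Fin m → ℝ),
        ∃ Δ : (Fin m → ℝ) → X, ∀ x ∈ K, Δ (A x) ∈ K ∧ A (Δ (A x)) = A x) ∧
      (∀ (A : X →ₗ[ℝ] (Fin m → ℝ)) (Δ : (Fin m → ℝ) → X),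
        (∀ x ∈ K, Δ (A x) ∈ K ∧ A (Δ (A x)) = A x) →
        (⨆ x ∈ K, (‖x - Δ (A x)‖₊ : ℝ≥0∞)) ≤
          ENNReal.ofReal a * ⨆ w ∈ K ∩ (LinearMap.ker A : Set X), (‖w‖₊ : ℝ≥0∞)) ∧
      compWidth m K ≤ ENNReal.ofReal a * gelfandWidth m K := by
  have exists_consistent : ∀ A : X →ₗ[ℝ] (Fin m → ℝ),
      ∃ Δ : (Fin m → ℝ) → X, ∀ x ∈ K, Δ (A x) ∈ K ∧ A (Δ (A x)) = A x := fun A =>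
    -- `invFunOn` picks a point of `K` in each fibre that meets `K`; elsewhere its value is irrelevant.
    ⟨Function.invFunOn A K, fun x hx =>
      ⟨Function.invFunOn_mem ⟨x, hx, rfl⟩, Function.invFunOn_eq ⟨x, hx, rfl⟩⟩⟩
  have error_le : ∀ (A : X →ₗ[ℝ] (Fin m → ℝ)) (Δ : (Fin m → ℝ) → X),
      (∀ x ∈ K, Δ (A x) ∈ K ∧ A (Δ (A x)) = A x) →
      (⨆ x ∈ K, (‖x - Δ (A x)‖₊ : ℝ≥0∞)) ≤
        ENNReal.ofReal a * ⨆ w ∈ K ∩ (LinearMap.ker A : Set X), (‖w‖₊ : ℝ≥0∞) := by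
    intro A Δ hΔ
    refine iSup₂_le fun x hx => ?_
    obtain ⟨hmem, hA⟩ := hΔ x hx
    have hneg : -Δ (A x) ∈ K := by rw [hK]; simpa using hmem
    obtain ⟨w, hw, hwx⟩ := hKK (Set.add_mem_add hx hneg)
    have hwx' : x - Δ (A x) = a • w := by rw [sub_eq_add_neg]; exact hwx.symm
    have hker : w ∈ (LinearMap.ker A : Set X) := by
      have h : a • A w = 0 := by rw [← map_smul, ← hwx', map_sub, hA, sub_self]
      exact (smul_eq_zero.mp h).resolve_left ha.ne'
    have hnorm : (‖x - Δ (A x)‖₊ : ℝ≥0∞) = ENNReal.ofReal a * (‖w‖₊ : ℝ≥0∞) := by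
      rw [hwx', nnnorm_smul, ENNReal.coe_mul, Real.nnnorm_of_nonneg ha.le,
        ENNReal.ofReal_eq_coe_nnreal ha.le]
    rw [hnorm]
    gcongr
    exact le_iSup₂ (f := fun (w : X) (_ : w ∈ K ∩ (LinearMap.ker A : Set X)) =>
      (‖w‖₊ : ℝ≥0∞)) w ⟨hw, hker⟩
  refine ⟨exists_consistent, error_le, ?_⟩
  unfold compWidth gelfandWidth
  rw [ENNReal.mul_iInf_of_ne (ENNReal.ofReal_pos.mpr ha).ne' ENNReal.ofReal_ne_top]
  refine iInf_mono fun A => ?_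
  obtain ⟨Δ, hΔ⟩ := exists_consistent A
  exact iInf_le_of_le Δ (error_le A Δ hΔ)
end

section
/- (Fixed recovery algorithm gives no adaptive gain.) Let X be a real normed vector space, m a natural number, a > 0 a real number, and K ⊆ X a subset with K = −K and K + K ⊆ a • K. Let A : X → ℝ^m be a linear map and Δ : ℝ^m → X a (possibly suboptimal) recovery map that is consistent on K, i.e., for every x ∈ K, Δ(A x) ∈ K and A(Δ(A x)) = A x. Then d^m(K) ≤ sup_{x ∈ K} ‖x − Δ(A x)‖ ≤ a · sup_{w ∈ K ∩ ker A} ‖w‖ (suprema taken in [0,∞]). -/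
/-!
Lower bound: for `w ∈ K ∩ ker A`, both `w` and `-w` lie in `K` and are recovered as `Δ 0`, so by
the triangle inequality one of the two errors is at least `‖w‖`.

Upper bound: by consistency and symmetry, `x - Δ (A x)` lies in `(K + K) ∩ ker A`, hence equals
`a • w` for some `w ∈ K`, and `w ∈ ker A` because `a ≠ 0`.
-/

open scoped ENNReal Pointwise

/-- Fixed recovery algorithm gives no adaptive gain: if `K` is symmetric, `K + K ⊆ a • K`, and
`Δ` is a (possibly suboptimal) recovery map consistent on `K` with respect to `A`, then
`d^m(K) ≤ sup_{x ∈ K} ‖x - Δ(A x)‖ ≤ a * sup_{w ∈ K ∩ ker A} ‖w‖`. -/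
theorem fixed_recovery_no_adaptive_gain
    {X : Type*} [NormedAddCommGroup X] [NormedSpace ℝ X] {m : ℕ}
    (K : Set X) (hK : K = -K) (a : ℝ) (ha : 0 < a) (hKK : K + K ⊆ a • K)
    (A : X →ₗ[ℝ] (Fin m → ℝ)) (Δ : (Fin m → ℝ) → X)
    (hcons : ∀ x ∈ K, Δ (A x) ∈ K ∧ A (Δ (A x)) = A x) :
    gelfandWidth m K ≤ (⨆ x ∈ K, (‖x - Δ (A x)‖₊ : ℝ≥0∞)) ∧
      (⨆ x ∈ K, (‖x - Δ (A x)‖₊ : ℝ≥0∞)) ≤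
        ENNReal.ofReal a * ⨆ w ∈ K ∩ (LinearMap.ker A : Set X), (‖w‖₊ : ℝ≥0∞) := by
  refine ⟨(iInf_le _ A).trans (iSup₂_le fun w hw => ?_), iSup₂_le fun x hx => ?_⟩
  · set S : ℝ≥0∞ := ⨆ x ∈ K, (‖x - Δ (A x)‖₊ : ℝ≥0∞) with hS
    have hAw : A w = 0 := hw.2
    have hneg : -w ∈ K := by
      rw [hK]
      simpa using hw.1
    have h1 : (‖w - Δ 0‖₊ : ℝ≥0∞) ≤ S := by
      have := le_iSup₂ (f := fun x (_ : x ∈ K) => (‖x - Δ (A x)‖₊ : ℝ≥0∞)) w hw.1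
      simpa only [hAw] using this
    have h2 : (‖-w - Δ 0‖₊ : ℝ≥0∞) ≤ S := by
      have := le_iSup₂ (f := fun x (_ : x ∈ K) => (‖x - Δ (A x)‖₊ : ℝ≥0∞)) (-w) hneg
      simpa only [map_neg, hAw, neg_zero] using this
    -- `w` and `-w` have the same measurements, and `2w` is the difference of their errors.
    have key : ‖w‖₊ ≤ max ‖w - Δ 0‖₊ ‖-w - Δ 0‖₊ := by
      have h : ‖(2 : ℝ) • w‖ ≤ ‖w - Δ 0‖ + ‖-w - Δ 0‖ := by
        have e : (2 : ℝ) • w = (w - Δ 0) - (-w - Δ 0) := by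
          rw [two_smul]
          abel
        rw [e]
        exact norm_sub_le _ _
      rw [norm_smul, Real.norm_ofNat] at h
      rw [← NNReal.coe_le_coe, NNReal.coe_max, coe_nnnorm, coe_nnnorm, coe_nnnorm]
      rcases le_total ‖w - Δ 0‖ ‖-w - Δ 0‖ with h' | h'
      · exact le_max_of_le_right (by linarith)
      · exact le_max_of_le_left (by linarith)
    rcases le_max_iff.1 key with h | h
    · exact (ENNReal.coe_le_coe.2 h).trans h1
    · exact (ENNReal.coe_le_coe.2 h).trans h2
  · obtain ⟨hΔ, hA⟩ := hcons x hx
    have hneg : -Δ (A x) ∈ K := by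
      rw [hK]
      simpa using hΔ
    obtain ⟨w, hw, hwe⟩ := hKK (Set.add_mem_add hx hneg)
    have hwe' : a • w = x - Δ (A x) := by
      rw [sub_eq_add_neg]
      exact hwe
    have hker : A w = 0 := by
      have h : a • A w = 0 := by rw [← map_smul, hwe', map_sub, hA, sub_self]
      exact (smul_eq_zero.1 h).resolve_left ha.ne'
    have hnorm : (‖x - Δ (A x)‖₊ : ℝ≥0∞) = ENNReal.ofReal a * (‖w‖₊ : ℝ≥0∞) := by
      rw [← hwe', nnnorm_smul, ENNReal.coe_mul, ← enorm_eq_nnnorm a,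
        Real.enorm_of_nonneg ha.le]
    rw [hnorm]
    gcongr
    exact le_iSup₂ (f := fun w (_ : w ∈ K ∩ (LinearMap.ker A : Set X)) => (‖w‖₊ : ℝ≥0∞))
      w ⟨hw, hker⟩
end
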